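/- (Intermediate step in the proof of Theorem 1.) Let λ ∈ (0,1) and k ≥ 2. Then F(O) ≤ 8·F(opt(S_1 ∪ … ∪ S_l | k)). -/

import Mathlib

open Finset

def IsGreedySel {ι : Type*} (qf : ι → ℝ) (df : ι → ι → ℝ) (a b : ℝ)
    (T : Finset ι) (k : ℕ) (z : Fin k → ι) : Prop :=
  Function.Injective z ∧ (∀ i, z i ∈ T) ∧
  (∀ hk : 0 < k, ∀ t ∈ T, qf t ≤ qf (z ⟨0, hk⟩)) ∧
  ∀ i : Fin k, ∀ t ∈ T, (∀ j : Fin k, j < i → t ≠ z j) →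
    a * qf t + b * ∑ j ∈ Finset.filter (fun j => j < i) Finset.univ, df t (z j) ≤
      a * qf (z i) + b * ∑ j ∈ Finset.filter (fun j => j < i) Finset.univ, df (z i) (z j)

noncomputable def Qsum {M : Type*} (q : M → ℝ) (S : Finset M) : ℝ := ∑ u ∈ S, q u

noncomputable def Dsum {M : Type*} [MetricSpace M] [DecidableEq M] (S : Finset M) : ℝ :=
  ∑ p ∈ S.offDiag, dist p.1 p.2

noncomputable def Fobj {M : Type*} [MetricSpace M] [DecidableEq M]
    (q : M → ℝ) (lam : ℝ) (S : Finset M) : ℝ :=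
  lam * Qsum q S + (1 - lam) * Dsum S

def IsOptSubset {M : Type*} [MetricSpace M] [DecidableEq M] (q : M → ℝ) (lam : ℝ)
    (T : Finset M) (k : ℕ) (O : Finset M) : Prop :=
  O ⊆ T ∧ O.card = k ∧ ∀ B ⊆ T, B.card = k → Fobj q lam B ≤ Fobj q lam O

open scoped BigOperators Function

/-! An optimal set `O` is compared with its image under an injection `ψ` which fixes the points of
`O` that greedy selection kept and moves every other point of its part `Upart i` into `S i`. By the
triangle inequality the value of `O` drops by at most the sum of `swapLoss` over the pairs
`(o, ψ o)`. If `o` was rejected by the greedy selection of `S i`, then adding up all the greedy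
inequalities shows that the losses of exchanging `o` for each of the points of `S i` add up to at
most `4 F(S i)`, hence to at most `4 F(OptU)`. Cyclic shifts make every available exchange equally
often, so some `ψ` is no worse than average: its loss inside part `i` is at most
`|O ∩ Upart i| / k · 4 F(OptU)`, which sums over `i` to `4 F(OptU)`. As `ψ(O)` is itself a
competitor of `OptU`, this gives `F(O) ≤ 5 F(OptU)`. -/

section Averaging

variable {α β ι R : Type*} [Field R] [LinearOrder R] [IsStrictOrderedRing R]

lemma exists_embedding_sum_le_sum_expect [Fintype α] [Fintype β]
    (h : Fintype.card α ≤ Fintype.card β) (c : α → β → R) :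
    ∃ φ : α ↪ β, ∑ x, c x (φ x) ≤ ∑ x, 𝔼 y, c x y := by
  obtain ⟨f⟩ := Function.Embedding.nonempty_of_card_le h
  rcases isEmpty_or_nonempty α with _ | ⟨⟨a⟩⟩
  · exact ⟨f, by simp⟩
  have : NeZero (Fintype.card β) := ⟨(Fintype.card_pos_iff.2 ⟨f a⟩).ne'⟩
  let e : β ≃ Fin (Fintype.card β) := Fintype.equivFin β
  let shift (s : Fin (Fintype.card β)) : α ↪ β :=
    f.trans ((e.trans (Equiv.addRight s)).trans e.symm).toEmbedding
  have expect_shift (x : α) : 𝔼 s, c x (shift s x) = 𝔼 y, c x y :=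
    Fintype.expect_equiv ((Equiv.addLeft (e (f x))).trans e.symm) _ _ fun _ ↦ rfl
  have h_average : 𝔼 s, ∑ x, c x (shift s x) ≤ ∑ x, 𝔼 y, c x y := by
    rw [expect_sum_comm]
    exact (sum_congr rfl fun x _ ↦ expect_shift x).le
  obtain ⟨s, -, hs⟩ := exists_le_of_expect_le univ_nonempty h_average
  exact ⟨shift s, hs⟩

lemma card_sdiff_div_card_sdiff_le [DecidableEq α] {X Y : Finset α} (hXY : #X ≤ #Y) :
    (#(X \ Y) / #(Y \ X) : R) ≤ #X / #Y := by
  have h_sdiff : #(X \ Y) ≤ #(Y \ X) := card_sdiff_le_card_sdiff_iff.2 hXY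
  rw [← card_sdiff_add_card_inter X Y, ← card_sdiff_add_card_inter Y X, inter_comm Y X]
  rcases (#(Y \ X)).eq_zero_or_pos with h_zero | h_pos
  · rw [h_zero, Nat.cast_zero, div_zero]
    positivity
  · rw [div_le_div_iff₀ (mod_cast h_pos) (mod_cast Nat.add_pos_left h_pos _)]
    norm_cast
    nlinarith

lemma exists_injOn_mapsTo_of_embedding [DecidableEq α] {X Y : Finset α}
    (φ : ↥(X \ Y) ↪ ↥(Y \ X)) :
    ∃ ψ : α → α, Set.InjOn ψ X ∧ Set.MapsTo ψ X Y ∧ (∀ x ∈ X ∩ Y, ψ x = x) ∧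
      ∀ x : ↥(X \ Y), ψ x = φ x := by
  have : ∀ x, (φ x : α) ∈ Y \ X := fun x ↦ (φ x).2
  refine ⟨fun x ↦ if h : x ∈ X \ Y then φ ⟨x, h⟩ else x, fun x hx y hy hxy ↦ ?_,
    fun x hx ↦ ?_, fun x hx ↦ ?_, fun x ↦ dif_pos x.2⟩
  · grind [φ.injective.eq_iff]
  all_goals grind

lemma exists_injOn_mapsTo_sum_le [DecidableEq α] {X Y : Finset α} (hXY : #X ≤ #Y)
    {c : α → α → R} (hc : ∀ x, c x x = 0) {C : R} (hC : 0 ≤ C)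
    (hsum : ∀ x ∈ X \ Y, ∑ y ∈ Y \ X, c x y ≤ C) :
    ∃ ψ : α → α, Set.InjOn ψ X ∧ Set.MapsTo ψ X Y ∧ ∑ x ∈ X, c x (ψ x) ≤ #X / #Y * C := by
  obtain ⟨φ, hφ⟩ := exists_embedding_sum_le_sum_expect (α := ↥(X \ Y)) (β := ↥(Y \ X))
    (by simpa only [Fintype.card_coe] using card_sdiff_le_card_sdiff_iff.2 hXY) fun x y ↦ c x y
  obtain ⟨ψ, h_inj, h_maps, h_fixed, hψ⟩ := exists_injOn_mapsTo_of_embedding φ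
  have h_expect (x : ↥(X \ Y)) : 𝔼 y : ↥(Y \ X), c x y ≤ C / #(Y \ X) := by
    rw [Fintype.expect_eq_sum_div_card, Fintype.card_coe, sum_coe_sort (Y \ X) (c x)]
    gcongr
    exact hsum x x.2
  refine ⟨ψ, h_inj, h_maps, ?_⟩
  calc ∑ x ∈ X, c x (ψ x) = ∑ x ∈ X \ Y, c x (ψ x) := by
        rw [← sum_inter_add_sum_sdiff X Y, add_eq_right]
        exact sum_eq_zero fun x hx ↦ by rw [h_fixed x hx, hc]
    _ = ∑ x : ↥(X \ Y), c x (φ x) := by simp_rw [← sum_coe_sort (X \ Y), hψ]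
    _ ≤ ∑ _x : ↥(X \ Y), C / #(Y \ X) := hφ.trans (sum_le_sum fun x _ ↦ h_expect x)
    _ = #(X \ Y) / #(Y \ X) * C := by
        rw [sum_const, card_univ, Fintype.card_coe, nsmul_eq_mul]
        ring
    _ ≤ #X / #Y * C := mul_le_mul_of_nonneg_right (card_sdiff_div_card_sdiff_le hXY) hC

lemma exists_forall_eqOn_of_pairwise_disjoint [Nonempty (α → β)] {X : ι → Set α}
    (hX : Pairwise (Disjoint on X)) (ψ : ι → α → β) :
    ∃ Ψ : α → β, ∀ i, Set.EqOn Ψ (ψ i) (X i) := by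
  obtain ⟨f⟩ := ‹Nonempty (α → β)›
  have h_value (x : α) : ∃ y, ∀ i, x ∈ X i → y = ψ i x := by
    by_cases hx : ∃ i, x ∈ X i
    · obtain ⟨i, hi⟩ := hx
      refine ⟨ψ i x, fun j hj ↦ ?_⟩
      rw [hX.eq (Set.not_disjoint_iff.2 ⟨x, hi, hj⟩)]
    · exact ⟨f x, fun i hi ↦ absurd ⟨i, hi⟩ hx⟩
  choose Ψ hΨ using h_value
  exact ⟨Ψ, fun i x hx ↦ hΨ x i hx⟩

lemma injOn_iUnion_of_pairwise_disjoint {X : ι → Set α} {Y : ι → Set β}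
    (hY : Pairwise (Disjoint on Y)) {f : α → β} (hf : ∀ i, Set.InjOn f (X i))
    (hfY : ∀ i, Set.MapsTo f (X i) (Y i)) :
    Set.InjOn f (⋃ i, X i) := by
  intro x hx y hy hxy
  obtain ⟨i, hi⟩ := Set.mem_iUnion.1 hx
  obtain ⟨j, hj⟩ := Set.mem_iUnion.1 hy
  obtain rfl : i = j := hY.eq (Set.not_disjoint_iff.2 ⟨f x, hfY i hi, hxy ▸ hfY j hj⟩)
  exact hf i hi hj hxy

lemma exists_injOn_biUnion_sum_le [Fintype ι] [DecidableEq α] {k : ℕ} {X Y : ι → Finset α}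
    (hX : Pairwise (Disjoint on X)) (hXk : #(univ.biUnion X) ≤ k)
    (hY : Pairwise (Disjoint on Y)) (hYk : ∀ i, #(Y i) = k)
    {c : α → α → R} (hc : ∀ x, c x x = 0) {C : R} (hC : 0 ≤ C)
    (hsum : ∀ i, ∀ x ∈ X i \ Y i, ∑ y ∈ Y i \ X i, c x y ≤ C) :
    ∃ ψ : α → α, Set.InjOn ψ (univ.biUnion X) ∧ (∀ i, Set.MapsTo ψ (X i) (Y i)) ∧
      ∑ x ∈ univ.biUnion X, c x (ψ x) ≤ C := by
  have hXY (i) : #(X i) ≤ #(Y i) :=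
    (card_le_card (subset_biUnion_of_mem X (mem_univ i))).trans (hXk.trans (hYk i).ge)
  choose ψ h_inj h_maps h_loss using fun i ↦ exists_injOn_mapsTo_sum_le (hXY i) hc hC (hsum i)
  have : Nonempty (α → α) := ⟨id⟩
  obtain ⟨Ψ, hΨ⟩ := exists_forall_eqOn_of_pairwise_disjoint (X := fun i ↦ (X i : Set α))
    (fun i j h ↦ disjoint_coe.2 (hX h)) ψ
  have hΨY (i) : Set.MapsTo Ψ (X i) (Y i) := (h_maps i).congr (hΨ i).symm
  refine ⟨Ψ, ?_, hΨY, ?_⟩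
  · rw [coe_biUnion]
    simpa using injOn_iUnion_of_pairwise_disjoint (Y := fun i ↦ (Y i : Set α))
      (fun i j h ↦ disjoint_coe.2 (hY h)) (fun i ↦ (hΨ i).injOn_iff.2 (h_inj i)) hΨY
  calc ∑ x ∈ univ.biUnion X, c x (Ψ x) = ∑ i, ∑ x ∈ X i, c x (ψ i x) := by
        rw [sum_biUnion (hX.set_pairwise _)]
        exact sum_congr rfl fun i _ ↦ sum_congr rfl fun x hx ↦ by rw [hΨ i hx]
    _ ≤ ∑ i, #(X i) / k * C := sum_le_sum fun i _ ↦ hYk i ▸ h_loss i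
    _ = #(univ.biUnion X) / k * C := by
        rw [card_biUnion (hX.set_pairwise _), Nat.cast_sum, sum_div, sum_mul]
    _ ≤ C := mul_le_of_le_one_left hC (div_le_one_of_le₀ (mod_cast hXk) k.cast_nonneg)

end Averaging

section PairSums

variable {ι A : Type*} [AddCommMonoid A]

lemma sum_sum_erase [DecidableEq ι] (s : Finset ι) (f : ι → A) :
    ∑ i ∈ s, ∑ j ∈ s.erase i, f j = (#s - 1) • ∑ i ∈ s, f i := by
  rw [sum_comm' (t' := s) (s' := s.erase) (by grind), smul_sum]
  exact sum_congr rfl fun i hi ↦ by rw [sum_const, card_erase_of_mem hi]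

lemma sum_sum_Iio_add_eq_sum_sum_erase [Fintype ι] [LinearOrder ι] [LocallyFiniteOrderTop ι]
    [LocallyFiniteOrderBot ι] (f : ι → ι → A) :
    ∑ i, ∑ j ∈ Iio i, (f i j + f j i) = ∑ i, ∑ j ∈ univ.erase i, f i j := by
  rw [sum_comm' (t' := univ) (s' := Ioi) (by simp)]
  simp_rw [← compl_singleton]
  rw [← sum_sum_Ioi_add_eq_sum_sum_off_diag fun i j ↦ f j i]
  simp_rw [add_comm]

lemma card_sub_one_mul_sum_dist_le {M : Type*} [PseudoMetricSpace M] [Fintype ι] [LinearOrder ι]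
    [LocallyFiniteOrderTop ι] [LocallyFiniteOrderBot ι] (z : ι → M) (o : M) :
    (Fintype.card ι - 1 : ℕ) * ∑ i, dist o (z i)
      ≤ 2 * ∑ i, ∑ j ∈ Iio i, dist o (z j) + ∑ i, ∑ j ∈ Iio i, dist (z i) (z j) :=
  calc (Fintype.card ι - 1 : ℕ) * ∑ i, dist o (z i)
      = ∑ i, ∑ j ∈ Iio i, (dist o (z j) + dist o (z i)) := by
        rw [sum_sum_Iio_add_eq_sum_sum_erase fun _ j ↦ dist o (z j), sum_sum_erase, card_univ,
          nsmul_eq_mul]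
    _ ≤ ∑ i, ∑ j ∈ Iio i, (2 * dist o (z j) + dist (z i) (z j)) := by
        refine sum_le_sum fun i _ ↦ sum_le_sum fun j _ ↦ ?_
        linarith [dist_triangle o (z j) (z i), dist_comm (z j) (z i)]
    _ = 2 * ∑ i, ∑ j ∈ Iio i, dist o (z j) + ∑ i, ∑ j ∈ Iio i, dist (z i) (z j) := by
        simp_rw [sum_add_distrib, mul_sum]

end PairSums

section Dispersion

variable {ι M : Type*} [MetricSpace M] [DecidableEq M]

lemma Dsum_eq_sum_erase (S : Finset M) : Dsum S = ∑ u ∈ S, ∑ v ∈ S.erase u, dist u v :=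
  sum_finset_product _ _ _ (by grind)

lemma Dsum_image [DecidableEq ι] {S : Finset ι} {f : ι → M} (hf : Set.InjOn f S) :
    Dsum (S.image f) = ∑ i ∈ S, ∑ j ∈ S.erase i, dist (f i) (f j) := by
  rw [Dsum_eq_sum_erase, sum_image hf]
  refine sum_congr rfl fun i _ ↦ ?_
  rw [sum_erase _ (dist_self _), sum_image hf, ← sum_erase S (dist_self (f i))]

lemma Dsum_nonneg (S : Finset M) : 0 ≤ Dsum S := sum_nonneg fun _ _ ↦ dist_nonneg

lemma Dsum_le_Dsum_image_add {S : Finset M} {f : M → M} (hf : Set.InjOn f S) :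
    Dsum S ≤ Dsum (S.image f) + 2 * (#S - 1 : ℕ) * ∑ u ∈ S, dist u (f u) :=
  calc Dsum S
      ≤ ∑ u ∈ S, ∑ v ∈ S.erase u, (dist u (f u) + dist v (f v) + dist (f u) (f v)) := by
        rw [Dsum_eq_sum_erase]
        gcongr
        exact dist_triangle4_right ..
    _ = Dsum (S.image f) + 2 * (#S - 1 : ℕ) * ∑ u ∈ S, dist u (f u) := by
        have h_left : ∑ u ∈ S, ∑ _v ∈ S.erase u, dist u (f u)
            = (#S - 1) • ∑ u ∈ S, dist u (f u) := by
          rw [smul_sum]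
          exact sum_congr rfl fun u hu ↦ by rw [sum_const, card_erase_of_mem hu]
        simp_rw [sum_add_distrib]
        rw [h_left, sum_sum_erase, ← Dsum_image hf, nsmul_eq_mul]
        ring

lemma Dsum_image_univ [Fintype ι] [LinearOrder ι] [LocallyFiniteOrderTop ι]
    [LocallyFiniteOrderBot ι] {z : ι → M} (hz : Function.Injective z) :
    Dsum (univ.image z) = 2 * ∑ i, ∑ j ∈ Iio i, dist (z i) (z j) := by
  rw [Dsum_image hz.injOn, ← sum_sum_Iio_add_eq_sum_sum_erase]
  simp_rw [dist_comm (z _) (z _), mul_sum, two_mul]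

end Dispersion

section Exchange

variable {M : Type*} [MetricSpace M] {q : M → ℝ} {lam : ℝ} {k : ℕ}

/-- An upper bound for the decrease of the objective when one point `u` of a `k`-element set is
replaced by `v`: each of the `2 (k - 1)` ordered pairs containing `u` gets shorter by at most
`dist u v`. The subtraction `k - 1` is truncated, so the weight is nonnegative even at `k = 0`. -/
noncomputable def swapLoss (q : M → ℝ) (lam : ℝ) (k : ℕ) (u v : M) : ℝ :=
  lam * (q u - q v) + (1 - lam) * (2 * (k - 1 : ℕ) * dist u v)

lemma swapLoss_self (q : M → ℝ) (lam : ℝ) (k : ℕ) (u : M) : swapLoss q lam k u u = 0 := by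
  simp [swapLoss]

variable [DecidableEq M]

lemma Fobj_nonneg (hq : ∀ u, 0 ≤ q u) (hlam0 : 0 ≤ lam) (hlam1 : lam ≤ 1) (S : Finset M) :
    0 ≤ Fobj q lam S :=
  add_nonneg (mul_nonneg hlam0 (sum_nonneg fun u _ ↦ hq u))
    (mul_nonneg (sub_nonneg.2 hlam1) (Dsum_nonneg S))

lemma Fobj_le_Fobj_image_add_sum_swapLoss (q : M → ℝ) (hlam1 : lam ≤ 1) {S : Finset M}
    {f : M → M} (hf : Set.InjOn f S) :
    Fobj q lam S ≤ Fobj q lam (S.image f) + ∑ u ∈ S, swapLoss q lam #S u (f u) := by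
  have h_dist := mul_le_mul_of_nonneg_left (Dsum_le_Dsum_image_add hf) (sub_nonneg.2 hlam1)
  simp only [Fobj, Qsum, swapLoss, sum_image hf, sum_add_distrib, sum_sub_distrib, ← mul_sum]
  linarith

end Exchange

namespace IsGreedySel

section Abstract

variable {ι : Type*} {q : ι → ℝ} {d : ι → ι → ℝ} {a b : ℝ} {T : Finset ι} {k : ℕ} {z : Fin k → ι}

lemma injective (hz : IsGreedySel q d a b T k z) : Function.Injective z := hz.1

lemma card_image [DecidableEq ι] (hz : IsGreedySel q d a b T k z) : #(univ.image z) = k := by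
  rw [card_image_of_injective _ hz.injective, card_fin]

lemma image_subset [DecidableEq ι] (hz : IsGreedySel q d a b T k z) : univ.image z ⊆ T :=
  image_subset_iff.2 fun i _ ↦ hz.2.1 i

lemma gain_le (hz : IsGreedySel q d a b T k z) {o : ι} (ho : o ∈ T) (hoz : o ∉ Set.range z)
    (i : Fin k) :
    a * q o + b * ∑ j ∈ Iio i, d o (z j) ≤ a * q (z i) + b * ∑ j ∈ Iio i, d (z i) (z j) := by
  have h := hz.2.2.2 i o ho fun j _ hoj ↦ hoz ⟨j, hoj.symm⟩
  rwa [filter_gt_eq_Iio] at h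

lemma sum_gain_le (hz : IsGreedySel q d a b T k z) {o : ι} (ho : o ∈ T)
    (hoz : o ∉ Set.range z) :
    k * (a * q o) + b * ∑ i, ∑ j ∈ Iio i, d o (z j)
      ≤ a * ∑ i, q (z i) + b * ∑ i, ∑ j ∈ Iio i, d (z i) (z j) := by
  simpa [sum_add_distrib, ← mul_sum] using
    sum_le_sum fun i (_ : i ∈ univ) ↦ hz.gain_le ho hoz i

end Abstract

variable {M : Type*} [MetricSpace M] [DecidableEq M] {q : M → ℝ} {lam : ℝ} {T : Finset M} {k : ℕ}
  {z : Fin k → M}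

lemma card_mul_add_sum_dist_le (hq : ∀ u, 0 ≤ q u) (hlam0 : 0 ≤ lam) (hlam1 : lam ≤ 1)
    (hz : IsGreedySel q (fun u v ↦ dist u v) lam (1 - lam) T k z) {o : M} (ho : o ∈ T)
    (hoz : o ∉ Set.range z) :
    k * (lam * q o) + (1 - lam) * (2 * (k - 1 : ℕ) * ∑ i, dist o (z i))
      ≤ 4 * Fobj q lam (univ.image z) := by
  have h_greedy := hz.sum_gain_le ho hoz
  have h_triangle := mul_le_mul_of_nonneg_left (card_sub_one_mul_sum_dist_le z o)
    (sub_nonneg.2 hlam1)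
  have h_pairs := mul_nonneg (sub_nonneg.2 hlam1) (Dsum_nonneg (univ.image z))
  have h_quality : 0 ≤ k * (lam * q o) := mul_nonneg k.cast_nonneg (mul_nonneg hlam0 (hq o))
  rw [Fintype.card_fin] at h_triangle
  rw [Dsum_image_univ hz.injective] at h_pairs
  rw [Fobj, Qsum, sum_image hz.injective.injOn, Dsum_image_univ hz.injective]
  linarith

lemma sum_swapLoss_le (hq : ∀ u, 0 ≤ q u) (hlam0 : 0 ≤ lam) (hlam1 : lam ≤ 1)
    (hz : IsGreedySel q (fun u v ↦ dist u v) lam (1 - lam) T k z) {o : M} (ho : o ∈ T)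
    (hoz : o ∉ Set.range z) {A : Finset M} (hA : A ⊆ univ.image z) :
    ∑ v ∈ A, swapLoss q lam k o v ≤ 4 * Fobj q lam (univ.image z) := by
  have : 0 ≤ 1 - lam := sub_nonneg.2 hlam1
  calc ∑ v ∈ A, swapLoss q lam k o v
      ≤ ∑ v ∈ A, (lam * q o + (1 - lam) * (2 * (k - 1 : ℕ) * dist o v)) := by
        unfold swapLoss
        gcongr with v
        exact sub_le_self _ (hq v)
    _ ≤ ∑ v ∈ univ.image z, (lam * q o + (1 - lam) * (2 * (k - 1 : ℕ) * dist o v)) :=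
        sum_le_sum_of_subset_of_nonneg hA fun v _ _ ↦ by have := hq o; positivity
    _ = k * (lam * q o) + (1 - lam) * (2 * (k - 1 : ℕ) * ∑ i, dist o (z i)) := by
        simp [sum_image hz.injective.injOn, sum_add_distrib, ← mul_sum]
    _ ≤ 4 * Fobj q lam (univ.image z) := hz.card_mul_add_sum_dist_le hq hlam0 hlam1 ho hoz

end IsGreedySel

theorem stmt_7_general {M ι : Type*} [MetricSpace M] [DecidableEq M] [Fintype ι] {q : M → ℝ}
    (hq : ∀ u, 0 ≤ q u) {lam : ℝ} (hlam0 : 0 ≤ lam) (hlam1 : lam ≤ 1) {k : ℕ}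
    {T : ι → Finset M} (hT : Pairwise (Disjoint on T)) {z : ι → Fin k → M}
    (hz : ∀ i, IsGreedySel q (fun u v ↦ dist u v) lam (1 - lam) (T i) k (z i))
    {OptU : Finset M} (hOptU : IsOptSubset q lam (univ.biUnion fun i ↦ univ.image (z i)) k OptU)
    {O : Finset M} (hOT : O ⊆ univ.biUnion T) (hOk : #O = k) :
    Fobj q lam O ≤ 5 * Fobj q lam OptU := by
  obtain ⟨-, -, h_opt⟩ := hOptU
  have hO : univ.biUnion (fun i ↦ O ∩ T i) = O := by
    rw [← inter_biUnion, inter_eq_left.2 hOT]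
  have h_loss (i) (o) (ho : o ∈ (O ∩ T i) \ univ.image (z i)) :
      ∑ v ∈ univ.image (z i) \ (O ∩ T i), swapLoss q lam k o v ≤ 4 * Fobj q lam OptU := by
    have hoT : o ∈ T i := by grind
    have hoz : o ∉ Set.range (z i) := by grind
    have h_le := h_opt _ (subset_biUnion_of_mem (fun i ↦ univ.image (z i)) (mem_univ i))
      (hz i).card_image
    linarith [(hz i).sum_swapLoss_le hq hlam0 hlam1 hoT hoz sdiff_subset (A := _ \ (O ∩ T i))]
  obtain ⟨ψ, h_inj, h_maps, h_total⟩ := exists_injOn_biUnion_sum_le (X := fun i ↦ O ∩ T i)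
    (fun i j h ↦ (hT h).mono inter_subset_right inter_subset_right) (hO.symm ▸ hOk.le)
    (fun i j h ↦ (hT h).mono (hz i).image_subset (hz j).image_subset) (fun i ↦ (hz i).card_image)
    (swapLoss_self q lam k) (mul_nonneg zero_le_four (Fobj_nonneg hq hlam0 hlam1 OptU)) h_loss
  rw [hO] at h_inj h_total
  have h_image : O.image ψ ⊆ univ.biUnion fun i ↦ univ.image (z i) := by
    rw [← hO, biUnion_image]
    exact biUnion_mono fun i _ ↦ image_subset_iff.2 (h_maps i)
  have h_exchange := Fobj_le_Fobj_image_add_sum_swapLoss q hlam1 h_inj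
  rw [hOk] at h_exchange
  linarith [h_opt _ h_image (by rw [card_image_of_injOn h_inj, hOk])]

theorem stmt_7 {M : Type*} [MetricSpace M] [DecidableEq M]
    (q : M → ℝ) (hq : ∀ u, 0 ≤ q u)
    (lam : ℝ) (hlam0 : 0 < lam) (hlam1 : lam < 1)
    (k l : ℕ)
    (Upart : Fin l → Finset M)
    (hdisj : ∀ i j, i ≠ j → Disjoint (Upart i) (Upart j))
    (hcard : ∀ i, k ≤ (Upart i).card)
    (U : Finset M) (hU : U = Finset.univ.biUnion Upart)
    (z : ∀ _ : Fin l, Fin k → M)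
    (hz : ∀ i, IsGreedySel q (fun u v => dist u v) lam (1 - lam) (Upart i) k (z i))
    (S : Fin l → Finset M) (hS : ∀ i, S i = Finset.univ.image (z i))
    (OptU : Finset M) (hOptU : IsOptSubset q lam (Finset.univ.biUnion S) k OptU)
    (O : Finset M) (hO : IsOptSubset q lam U k O)
    (hk : 2 ≤ k) :
    Fobj q lam O ≤ 8 * Fobj q lam OptU := by
  subst hU
  obtain rfl : S = fun i ↦ univ.image (z i) := funext hS
  linarith [stmt_7_general hq hlam0.le hlam1.le (fun i j ↦ hdisj i j) hz hOptU hO.1 hO.2.1,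
    Fobj_nonneg hq hlam0.le hlam1.le OptU]
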